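/- arXiv:1409.5767 — 3 statements merged into one kernel-verified Lean document; each statement's English description precedes it below -/
import Mathlib

section
/- Let n ≥ 1 and let S be an n × n matrix with natural-number entries, each entry being 0 or 1. For every positive integer N, the cardinality of the set of aperiodic closed walks of length N equals ∑_{g | N} μ(g) · Tr(S^{N/g}), where the sum runs over the positive divisors g of N and μ is the classical Möbius function. -/
/-- A closed walk of length `N` with respect to an `n × n` zero-one matrix `S`:
a function `f : ZMod N → Fin n` such that consecutive vertices are adjacent. -/
def IsClosedWalk {n : ℕ} (S : Matrix (Fin n) (Fin n) ℕ) {N : ℕ}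
    (f : ZMod N → Fin n) : Prop :=
  ∀ k : ZMod N, S (f k) (f (k + 1)) = 1

/-- A closed walk is aperiodic if no nonzero rotation fixes it. -/
def IsAperiodic {n N : ℕ} (f : ZMod N → Fin n) : Prop :=
  ∀ d : ZMod N, d ≠ 0 → ∃ k : ZMod N, f (k + d) ≠ f k

/-!
The shift on one-sided sequences turns closed walks into periodic points: unrolling a closed walk
of length `N` gives a sequence of period `N`, and the walk is aperiodic exactly when `N` is the
minimal period of that sequence. For any self-map, a point of period `N` has a unique minimal
period and it divides `N`, so Möbius inversion counts the points of minimal period `N`.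
Expanding the matrix product shows that `Tr (S ^ N)` counts the closed walks of length `N`.
-/

open Function SymbolicDynamics.FullShift

section PeriodicPoints

variable {α : Type*} {f : α → α} {s : Set α} {N : ℕ}

theorem ptsOfPeriod_subset_of_dvd {m n : ℕ} (h : m ∣ n) : ptsOfPeriod f m ⊆ ptsOfPeriod f n :=
  fun _ hx => IsPeriodicPt.trans_dvd hx h

theorem iUnion_divisors_minimalPeriod_eq (f : α → α) (hN : N ≠ 0) :
    ⋃ d ∈ N.divisors, {x | minimalPeriod f x = d} = ptsOfPeriod f N := by
  ext x
  simp [hN, isPeriodicPt_iff_minimalPeriod_dvd]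

theorem sum_divisors_ncard_minimalPeriod_eq (hN : N ≠ 0) (hs : (s ∩ ptsOfPeriod f N).Finite) :
    ∑ d ∈ N.divisors, (s ∩ {x | minimalPeriod f x = d}).ncard = (s ∩ ptsOfPeriod f N).ncard := by
  have hunion : ⋃ d ∈ (N.divisors : Set ℕ), s ∩ {x | minimalPeriod f x = d} =
      s ∩ ptsOfPeriod f N := by
    simp only [Finset.mem_coe, ← Set.inter_iUnion₂, iUnion_divisors_minimalPeriod_eq f hN]
  have hdisjoint : (N.divisors : Set ℕ).PairwiseDisjoint
      fun d => s ∩ {x | minimalPeriod f x = d} := fun _ _ _ _ hne =>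
    Set.disjoint_left.2 fun _ hx hy => hne (hx.2.symm.trans hy.2)
  rw [← hunion, Set.Finite.ncard_biUnion N.divisors.finite_toSet _ hdisjoint,
    finsum_mem_coe_finset]
  exact fun d hd => hs.subset (hunion ▸ Set.subset_iUnion₂_of_subset d hd subset_rfl)

theorem ncard_minimalPeriod_eq_sum_moebius (hN : N ≠ 0) (hs : (s ∩ ptsOfPeriod f N).Finite) :
    ((s ∩ {x | minimalPeriod f x = N}).ncard : ℤ) =
      ∑ g ∈ N.divisors, ArithmeticFunction.moebius g * (s ∩ ptsOfPeriod f (N / g)).ncard := by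
  have hinv := (ArithmeticFunction.sum_eq_iff_sum_mul_moebius_eq_on
    (f := fun d => ((s ∩ {x | minimalPeriod f x = d}).ncard : ℤ))
    (g := fun d => ((s ∩ ptsOfPeriod f d).ncard : ℤ))
    {d | (s ∩ ptsOfPeriod f d).Finite}
    fun _ _ hdvd hfin =>
      hfin.subset (Set.inter_subset_inter_right s (ptsOfPeriod_subset_of_dvd hdvd))).1
    fun d hd hfin => by exact_mod_cast sum_divisors_ncard_minimalPeriod_eq hd.ne' hfin
  rw [← hinv N (Nat.pos_of_ne_zero hN) hs]
  exact Nat.sum_divisorsAntidiagonal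
    fun a b => ArithmeticFunction.moebius a * ((s ∩ ptsOfPeriod f b).ncard : ℤ)

end PeriodicPoints

section Unroll

variable {α : Type*} {N : ℕ}

theorem iterate_shift {G : Type*} [AddMonoid G] (g : G) (m : ℕ) :
    (shift g : (G → α) → G → α)^[m] = shift (m • g) := by
  induction m with
  | zero => ext; simp
  | succ m ih =>
    ext x
    rw [iterate_succ_apply', ih, succ_nsmul, shift_add]

theorem mem_ptsOfPeriod_shift_one_iff {m : ℕ} {x : ℕ → α} :
    x ∈ ptsOfPeriod (shift 1) m ↔ Periodic x m := by
  simp only [mem_ptsOfPeriod, IsPeriodicPt, IsFixedPt, iterate_shift, funext_iff, shift_apply,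
    smul_eq_mul, mul_one, add_comm m, Periodic]

/-- The sequence that runs repeatedly through a cyclic word `f` of length `N`. It transports
closed walks into the full shift `ℕ → α`, where walks of different lengths can be compared. -/
def unroll (f : ZMod N → α) : ℕ → α := fun k => f k

theorem isPeriodicPt_unroll_iff [NeZero N] (f : ZMod N → α) (d : ℕ) :
    IsPeriodicPt (shift 1) d (unroll f) ↔ ∀ k, f (k + d) = f k := by
  rw [← mem_ptsOfPeriod, mem_ptsOfPeriod_shift_one_iff,
    (ZMod.natCast_zmod_surjective (n := N)).forall]
  simp only [Periodic, unroll, Nat.cast_add]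

theorem minimalPeriod_unroll_eq_iff [NeZero N] (f : ZMod N → α) :
    minimalPeriod (shift 1) (unroll f) = N ↔
      ∀ d : ZMod N, d ≠ 0 → ∃ k, f (k + d) ≠ f k := by
  have hdvd : minimalPeriod (shift 1) (unroll f) ∣ N :=
    ((isPeriodicPt_unroll_iff f N).2 fun k => by simp).minimalPeriod_dvd
  rw [(ZMod.natCast_zmod_surjective (n := N)).forall]
  simp only [ne_eq, ← not_forall, ← isPeriodicPt_unroll_iff, not_imp_not,
    ZMod.natCast_eq_zero_iff, isPeriodicPt_iff_minimalPeriod_dvd]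
  exact ⟨fun h d hd => h ▸ hd, fun h => hdvd.antisymm (h _ dvd_rfl)⟩

theorem unroll_injective [NeZero N] : Injective (unroll : (ZMod N → α) → ℕ → α) :=
  (ZMod.natCast_zmod_surjective (n := N)).injective_comp_right

theorem range_unroll [NeZero N] :
    Set.range (unroll : (ZMod N → α) → ℕ → α) = ptsOfPeriod (shift 1) N := by
  ext x
  constructor
  · rintro ⟨f, rfl⟩
    exact (isPeriodicPt_unroll_iff f N).2 fun k => by simp
  · intro hx
    have hper : Periodic x N := mem_ptsOfPeriod_shift_one_iff.1 hx
    refine ⟨fun k => x k.val, funext fun k => ?_⟩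
    rw [unroll, ZMod.val_natCast, hper.map_mod_nat]

theorem finite_ptsOfPeriod_shift_one [Finite α] [NeZero N] :
    (ptsOfPeriod (shift 1 : (ℕ → α) → ℕ → α) N).Finite :=
  range_unroll (α := α) (N := N) ▸ Set.finite_range unroll

theorem ncard_preimage_unroll [NeZero N] (X : Set (ℕ → α)) :
    (unroll (N := N) ⁻¹' X).ncard = (X ∩ ptsOfPeriod (shift 1) N).ncard := by
  rw [← Set.ncard_image_of_injective _ unroll_injective, Set.image_preimage_eq_inter_range,
    range_unroll]

theorem ncard_preimage_unroll_inter_minimalPeriod [NeZero N] (X : Set (ℕ → α)) :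
    (unroll (N := N) ⁻¹' (X ∩ {x | minimalPeriod (shift 1) x = N})).ncard =
      (X ∩ {x | minimalPeriod (shift 1) x = N}).ncard := by
  rw [ncard_preimage_unroll, Set.inter_eq_left.2]
  exact fun x hx => isPeriodicPt_iff_minimalPeriod_dvd.2 hx.2.dvd

/-- The one-sided vertex shift of a relation `r`: the infinite walks in the directed graph with
edge relation `r`. -/
def vertexShift (r : α → α → Prop) : Set (ℕ → α) := {x | ∀ k, r (x k) (x (k + 1))}

theorem unroll_mem_vertexShift_iff [NeZero N] (r : α → α → Prop) (f : ZMod N → α) :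
    unroll f ∈ vertexShift r ↔ ∀ k, r (f k) (f (k + 1)) := by
  rw [(ZMod.natCast_zmod_surjective (n := N)).forall]
  simp only [vertexShift, unroll, Set.mem_ofPred_eq, Nat.cast_add, Nat.cast_one]

end Unroll

section Trace

variable {ι R : Type*} [Fintype ι] [DecidableEq ι] [CommSemiring R]

/-- A path from `i` to `j` is given by its interior vertices `p`; its `k`-th edge joins entry `k` of
`i, p` to entry `k` of `p, j`. -/
theorem matrix_pow_succ_apply_eq_sum_prod (S : Matrix ι ι R) (m : ℕ) (i j : ι) :
    (S ^ (m + 1)) i j = ∑ p : Fin m → ι, ∏ k : Fin (m + 1),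
      S (Fin.cons (α := fun _ => ι) i p k) (Fin.snoc (α := fun _ => ι) p j k) := by
  induction m generalizing i with
  | zero => simp [Fin.snoc]
  | succ m ih =>
    rw [pow_succ', Matrix.mul_apply, ← (Fin.consEquiv fun _ : Fin (m + 1) => ι).sum_comp,
      Fintype.sum_prod_type]
    refine Finset.sum_congr rfl fun l _ => ?_
    rw [ih, Finset.mul_sum]
    refine Finset.sum_congr rfl fun p _ => ?_
    have hsnoc : Fin.snoc (α := fun _ => ι) (Fin.consEquiv (fun _ => ι) (l, p)) j =
        Fin.cons (α := fun _ => ι) l (Fin.snoc (α := fun _ => ι) p j) :=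
      (Fin.cons_snoc_eq_snoc_cons l p j).symm
    simp only [hsnoc, Fin.prod_univ_succ (n := m + 1), Fin.consEquiv_apply, Fin.cons_zero,
      Fin.cons_succ]

theorem matrix_trace_pow_eq_sum_prod (S : Matrix ι ι R) (N : ℕ) [NeZero N] :
    (S ^ N).trace = ∑ f : ZMod N → ι, ∏ k, S (f k) (f (k + 1)) := by
  obtain ⟨m, rfl⟩ := Nat.exists_eq_succ_of_ne_zero (NeZero.ne N)
  change _ = ∑ f : Fin (m + 1) → ι, ∏ k, S (f k) (f (k + 1))
  rw [← (Fin.consEquiv fun _ : Fin (m + 1) => ι).sum_comp, Fintype.sum_prod_type]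
  simp only [Matrix.trace, Matrix.diag_apply, Nat.succ_eq_add_one,
    matrix_pow_succ_apply_eq_sum_prod, Fin.snoc_eq_cons_rotate, finRotate_apply,
    Fin.consEquiv_apply]

theorem trace_pow_eq_ncard_vertexShift_inter_ptsOfPeriod {S : Matrix ι ι ℕ}
    (hS : ∀ i j, S i j = 0 ∨ S i j = 1) (N : ℕ) [NeZero N] :
    (S ^ N).trace = (vertexShift (S · · = 1) ∩ ptsOfPeriod (shift 1) N).ncard := by
  classical
  have hprod (f : ZMod N → ι) :
      ∏ k, S (f k) (f (k + 1)) = if ∀ k, S (f k) (f (k + 1)) = 1 then 1 else 0 := by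
    split_ifs with h
    · exact Finset.prod_eq_one fun k _ => h k
    · obtain ⟨k, hk⟩ := not_forall.1 h
      exact Finset.prod_eq_zero (Finset.mem_univ k) ((hS _ _).resolve_right hk)
  simp only [matrix_trace_pow_eq_sum_prod, hprod, ← ncard_preimage_unroll, Set.preimage,
    unroll_mem_vertexShift_iff, Finset.sum_boole, Nat.cast_id, Set.ncard_eq_toFinset_card',
    Set.toFinset_ofPred]

end Trace

theorem card_aperiodic_closedWalks_general {ι : Type*} [Fintype ι] [DecidableEq ι]
    {S : Matrix ι ι ℕ} (hS : ∀ i j, S i j = 0 ∨ S i j = 1) {N : ℕ} (hN : 0 < N) :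
    (Nat.card {f : ZMod N → ι //
        (∀ k, S (f k) (f (k + 1)) = 1) ∧ ∀ d, d ≠ 0 → ∃ k, f (k + d) ≠ f k} : ℤ) =
      ∑ g ∈ N.divisors, ArithmeticFunction.moebius g * ((S ^ (N / g)).trace : ℤ) := by
  have : NeZero N := ⟨hN.ne'⟩
  let W : Set (ℕ → ι) := vertexShift (S · · = 1)
  let M : Set (ℕ → ι) := {x | minimalPeriod (shift 1) x = N}
  calc _
    _ = ((unroll (N := N) ⁻¹' (W ∩ M)).ncard : ℤ) := by
      simp only [← unroll_mem_vertexShift_iff (S · · = 1), ← minimalPeriod_unroll_eq_iff]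
      rfl
    _ = (W ∩ M).ncard := by rw [ncard_preimage_unroll_inter_minimalPeriod]
    _ = ∑ g ∈ N.divisors,
          ArithmeticFunction.moebius g * (W ∩ ptsOfPeriod (shift 1) (N / g)).ncard :=
      ncard_minimalPeriod_eq_sum_moebius hN.ne' (finite_ptsOfPeriod_shift_one.inter_of_right W)
    _ = ∑ g ∈ N.divisors, ArithmeticFunction.moebius g * ((S ^ (N / g)).trace : ℤ) :=
      Finset.sum_congr rfl fun g hg => by
        have : NeZero (N / g) :=
          ⟨(Nat.div_pos (Nat.divisor_le hg) (Nat.pos_of_mem_divisors hg)).ne'⟩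
        rw [trace_pow_eq_ncard_vertexShift_inter_ptsOfPeriod hS]

theorem card_aperiodic_closedWalks
    (n : ℕ) (hn : 1 ≤ n) (S : Matrix (Fin n) (Fin n) ℕ)
    (hS : ∀ i j, S i j = 0 ∨ S i j = 1) (N : ℕ) (hN : 0 < N) :
    (Nat.card {f : ZMod N → Fin n // IsClosedWalk S f ∧ IsAperiodic f} : ℤ) =
      ∑ g ∈ N.divisors,
        (ArithmeticFunction.moebius g) * ((Matrix.trace (S ^ (N / g)) : ℕ) : ℤ) :=
  card_aperiodic_closedWalks_general hS hN
end

section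
/- Let R be a commutative ring, T1 an m × m matrix over R and T2 an n × n matrix over R. For every positive integer N, ∑ S(s,T1)·S(t,T2) = S(N, T1 ⊗ T2), where the sum runs over all pairs (s,t) of positive divisors of N with lcm(s,t) = N, and T1 ⊗ T2 denotes the Kronecker product of T1 and T2. -/
open Kronecker

/-- `S(N,T) = ∑_{g ∣ N} μ(g) · Tr(T^{N/g})` for a square matrix `T` over a
commutative ring. -/
def moebiusTraceSum {R : Type*} [CommRing R] {α : Type*} [Fintype α]
    [DecidableEq α] (T : Matrix α α R) (N : ℕ) : R :=
  ∑ g ∈ N.divisors, (ArithmeticFunction.moebius g) • Matrix.trace (T ^ (N / g))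


/- Summing over the divisors of `N` turns the sum over pairs with a given lcm into an ordinary
product, because two numbers both divide `N` exactly when their lcm does. By Möbius inversion,
`S(·, T)` is the sequence whose divisor sums are `Tr(T^N)`, and these traces are multiplicative for
the Kronecker product. So both sides of the relation have divisor sums
`Tr(T1^N) * Tr(T2^N) = Tr((T1 ⊗ T2)^N)`, hence agree. -/

section LcmConvolution

theorem filter_lcm_eq_divisors_product_of_dvd {d N : ℕ} (hd : d ∣ N) (hN : N ≠ 0) :
    (d.divisors ×ˢ d.divisors).filter (fun p => Nat.lcm p.1 p.2 = d) =
      (N.divisors ×ˢ N.divisors).filter (fun p => Nat.lcm p.1 p.2 = d) := by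
  refine (Finset.filter_subset_filter _ (Finset.product_subset_product
    (Nat.divisors_subset_of_dvd hN hd) (Nat.divisors_subset_of_dvd hN hd))).antisymm ?_
  rintro ⟨a, b⟩ hab
  obtain rfl : Nat.lcm a b = d := (Finset.mem_filter.1 hab).2
  have hlcm : Nat.lcm a b ≠ 0 := ne_zero_of_dvd_ne_zero hN hd
  simp [hlcm, Nat.dvd_lcm_left, Nat.dvd_lcm_right]

theorem sum_divisors_sum_filter_lcm_eq {M : Type*} [AddCommMonoid M] (F : ℕ × ℕ → M) (N : ℕ) :
    ∑ d ∈ N.divisors,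
        ∑ p ∈ (d.divisors ×ˢ d.divisors).filter (fun p => Nat.lcm p.1 p.2 = d), F p =
      ∑ p ∈ N.divisors ×ˢ N.divisors, F p := by
  have lcm_mem : ∀ p ∈ N.divisors ×ˢ N.divisors, Nat.lcm p.1 p.2 ∈ N.divisors := by
    intro p hp
    simp only [Finset.mem_product, Nat.mem_divisors] at hp ⊢
    exact ⟨Nat.lcm_dvd hp.1.1 hp.2.1, hp.1.2⟩
  rw [← Finset.sum_fiberwise_of_maps_to lcm_mem]
  refine Finset.sum_congr rfl fun d hd => ?_
  obtain ⟨hdN, hN⟩ := Nat.mem_divisors.1 hd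
  rw [filter_lcm_eq_divisors_product_of_dvd hdN hN]

variable {R : Type*} [NonUnitalNonAssocSemiring R]

/-- The lcm-convolution (von Sterneck–Lehmer product) of two sequences, the analogue of Dirichlet
convolution with `lcm(s, t) = N` in place of `s * t = N`. Its value at `0` is the empty sum,
since `Nat.divisors 0 = ∅`. -/
def lcmConvolution (f g : ℕ → R) (N : ℕ) : R :=
  ∑ p ∈ (N.divisors ×ˢ N.divisors).filter (fun p => Nat.lcm p.1 p.2 = N), f p.1 * g p.2

theorem sum_divisors_lcmConvolution (f g : ℕ → R) (N : ℕ) :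
    ∑ d ∈ N.divisors, lcmConvolution f g d =
      (∑ s ∈ N.divisors, f s) * ∑ t ∈ N.divisors, g t := by
  rw [Finset.sum_mul_sum, ← Finset.sum_product']
  exact sum_divisors_sum_filter_lcm_eq (fun p => f p.1 * g p.2) N

end LcmConvolution

section MoebiusTransform

/-- The Möbius transform `N ↦ ∑_{g ∣ N} μ(g) a(N/g)` of a sequence `a`, of which
`moebiusTraceSum T` is the case `a k = Tr(T^k)`. Its value at `0` is the empty sum. -/
def moebiusTransform {A : Type*} [AddCommGroup A] (a : ℕ → A) (N : ℕ) : A :=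
  ∑ g ∈ N.divisors, ArithmeticFunction.moebius g • a (N / g)

theorem sum_divisors_eq_iff_moebiusTransform_eq {A : Type*} [AddCommGroup A] {f a : ℕ → A} :
    (∀ N > 0, ∑ d ∈ N.divisors, f d = a N) ↔ ∀ N > 0, moebiusTransform a N = f N := by
  simp only [ArithmeticFunction.sum_eq_iff_sum_smul_moebius_eq, moebiusTransform,
    Nat.sum_divisorsAntidiagonal (fun g k => ArithmeticFunction.moebius g • a k)]

theorem sum_divisors_moebiusTransform {A : Type*} [AddCommGroup A] (a : ℕ → A) {N : ℕ}
    (hN : 0 < N) : ∑ d ∈ N.divisors, moebiusTransform a d = a N :=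
  sum_divisors_eq_iff_moebiusTransform_eq.2 (fun _ _ => rfl) N hN

theorem lcmConvolution_moebiusTransform {R : Type*} [NonUnitalNonAssocRing R] (a b : ℕ → R)
    {N : ℕ} (hN : 0 < N) :
    lcmConvolution (moebiusTransform a) (moebiusTransform b) N = moebiusTransform (a * b) N := by
  refine (sum_divisors_eq_iff_moebiusTransform_eq.1 (fun k hk => ?_) N hN).symm
  rw [sum_divisors_lcmConvolution, sum_divisors_moebiusTransform a hk,
    sum_divisors_moebiusTransform b hk, Pi.mul_apply]

end MoebiusTransform

section Kronecker

variable {α β : Type*} [Fintype α] [DecidableEq α] [Fintype β] [DecidableEq β]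

theorem kronecker_pow {R : Type*} [CommSemiring R] (A : Matrix α α R) (B : Matrix β β R) (k : ℕ) :
    (A ⊗ₖ B) ^ k = (A ^ k) ⊗ₖ (B ^ k) := by
  induction k with
  | zero => simp
  | succ k ih => rw [pow_succ, pow_succ, pow_succ, ih, Matrix.mul_kronecker_mul]

theorem trace_kronecker_pow {R : Type*} [CommSemiring R] (A : Matrix α α R) (B : Matrix β β R)
    (k : ℕ) : Matrix.trace ((A ⊗ₖ B) ^ k) = Matrix.trace (A ^ k) * Matrix.trace (B ^ k) := by
  rw [kronecker_pow, Matrix.trace_kronecker]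

theorem carlitz_relation_general {R : Type*} [CommRing R] (A : Matrix α α R) (B : Matrix β β R)
    {N : ℕ} (hN : 0 < N) :
    ∑ p ∈ (N.divisors ×ˢ N.divisors).filter (fun p => Nat.lcm p.1 p.2 = N),
        moebiusTraceSum A p.1 * moebiusTraceSum B p.2 =
      moebiusTraceSum (A ⊗ₖ B) N := by
  calc
    _ = moebiusTransform (fun k => Matrix.trace (A ^ k) * Matrix.trace (B ^ k)) N :=
      lcmConvolution_moebiusTransform (fun k => Matrix.trace (A ^ k))
        (fun k => Matrix.trace (B ^ k)) hN
    _ = moebiusTransform (fun k => Matrix.trace ((A ⊗ₖ B) ^ k)) N := by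
      simp only [trace_kronecker_pow]
    _ = moebiusTraceSum (A ⊗ₖ B) N := rfl

end Kronecker

theorem carlitz_relation
    {R : Type*} [CommRing R] (m n : ℕ)
    (T1 : Matrix (Fin m) (Fin m) R) (T2 : Matrix (Fin n) (Fin n) R)
    (N : ℕ) (hN : 0 < N) :
    ∑ p ∈ (N.divisors ×ˢ N.divisors).filter (fun p => Nat.lcm p.1 p.2 = N),
        moebiusTraceSum T1 p.1 * moebiusTraceSum T2 p.2 =
      moebiusTraceSum (T1 ⊗ₖ T2) N :=
  carlitz_relation_general T1 T2 hN
end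

section
/- Let R be a commutative ring, l ≥ 1, and let T_1, ..., T_l be square matrices over R. For every positive integer N, ∑ S(s_1,T_1) · S(s_2,T_2) · ... · S(s_l,T_l) = S(N, T_1 ⊗ T_2 ⊗ ... ⊗ T_l), where the sum runs over all l-tuples (s_1,...,s_l) of positive divisors of N with lcm(s_1,...,s_l) = N, and T_1 ⊗ ... ⊗ T_l is the iterated Kronecker product. -/
/-- The iterated Kronecker product of a family of square matrices
`T i : Matrix (Fin (m i)) (Fin (m i)) R`, `i : Fin l`: its rows and columns are
indexed by tuples, and its `(x, y)` entry is `∏ i, (T i) (x i) (y i)`. -/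
def iteratedKronecker {R : Type*} [CommRing R] {l : ℕ} {m : Fin l → ℕ}
    (T : (i : Fin l) → Matrix (Fin (m i)) (Fin (m i)) R) :
    Matrix ((i : Fin l) → Fin (m i)) ((i : Fin l) → Fin (m i)) R :=
  Matrix.of fun x y => ∏ i, T i (x i) (y i)

/-!
Möbius inversion characterises `S(·, T)` by `∑_{d ∣ n} S(d, T) = Tr(Tⁿ)` for `n > 0`, so it suffices
to sum the left-hand side of the relation over the divisors of `n`. Every tuple of divisors of `n`
has a least common multiple dividing `n`, hence the condition on the least common multiple
disappears and the sum factors as `∏ᵢ ∑_{d ∣ n} S(d, Tᵢ) = ∏ᵢ Tr(Tᵢⁿ)`, which is the trace of the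
`n`-th power of the Kronecker product.
-/

section LcmFibres

variable {ι : Type*} [Fintype ι] [DecidableEq ι]

theorem mem_piFinset_divisors_iff_lcm_dvd {n : ℕ} (hn : n ≠ 0) {s : ι → ℕ} :
    s ∈ Fintype.piFinset (fun _ : ι => n.divisors) ↔ Finset.univ.lcm s ∣ n := by
  simp [Finset.lcm_dvd_iff, hn]

theorem filter_lcm_eq_piFinset_divisors_of_dvd {d n : ℕ} (hn : n ≠ 0) (hdn : d ∣ n) :
    (Fintype.piFinset fun _ : ι => d.divisors).filter (fun s => Finset.univ.lcm s = d) =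
      (Fintype.piFinset fun _ : ι => n.divisors).filter (fun s => Finset.univ.lcm s = d) := by
  ext s
  simp only [Finset.mem_filter, mem_piFinset_divisors_iff_lcm_dvd hn,
    mem_piFinset_divisors_iff_lcm_dvd (ne_zero_of_dvd_ne_zero hn hdn)]
  refine and_congr_left fun hs => ?_
  simp only [hs, dvd_refl, hdn]

theorem sum_divisors_sum_filter_lcm {M : Type*} [AddCommMonoid M] (f : (ι → ℕ) → M) {n : ℕ}
    (hn : n ≠ 0) :
    ∑ d ∈ n.divisors, ∑ s ∈ (Fintype.piFinset fun _ : ι => d.divisors).filter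
        (fun s => Finset.univ.lcm s = d), f s =
      ∑ s ∈ Fintype.piFinset fun _ : ι => n.divisors, f s := by
  have lcm_mem_divisors : ∀ s ∈ Fintype.piFinset fun _ : ι => n.divisors,
      Finset.univ.lcm s ∈ n.divisors := fun s hs =>
    Nat.mem_divisors.2 ⟨(mem_piFinset_divisors_iff_lcm_dvd hn).1 hs, hn⟩
  rw [← Finset.sum_fiberwise_of_maps_to lcm_mem_divisors]
  refine Finset.sum_congr rfl fun d hd => ?_
  rw [filter_lcm_eq_piFinset_divisors_of_dvd hn (Nat.dvd_of_mem_divisors hd)]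

theorem sum_divisors_sum_filter_lcm_prod {R : Type*} [CommSemiring R] (f : ι → ℕ → R) {n : ℕ}
    (hn : n ≠ 0) :
    ∑ d ∈ n.divisors, ∑ s ∈ (Fintype.piFinset fun _ : ι => d.divisors).filter
        (fun s => Finset.univ.lcm s = d), ∏ i, f i (s i) =
      ∏ i, ∑ d ∈ n.divisors, f i d := by
  rw [sum_divisors_sum_filter_lcm _ hn, Finset.prod_univ_sum]

end LcmFibres

section PiKronecker

variable {ι : Type*} [Fintype ι] {R : Type*} [CommSemiring R] {α β γ : ι → Type*}

/-- The Kronecker product of a finite family of rectangular matrices, with rows and columns indexed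
by dependent functions. It extends `iteratedKronecker` to arbitrary index types, so that no order of
the factors is involved. -/
def piKronecker (A : ∀ i, Matrix (α i) (β i) R) : Matrix (∀ i, α i) (∀ i, β i) R :=
  Matrix.of fun x y => ∏ i, A i (x i) (y i)

theorem piKronecker_apply (A : ∀ i, Matrix (α i) (β i) R) (x : ∀ i, α i) (y : ∀ i, β i) :
    piKronecker A x y = ∏ i, A i (x i) (y i) :=
  rfl

theorem piKronecker_one [∀ i, DecidableEq (α i)] :
    piKronecker (fun i => (1 : Matrix (α i) (α i) R)) = 1 := by
  ext x y
  simp [piKronecker_apply, Matrix.one_apply, Finset.prod_ite_zero, funext_iff]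

variable [DecidableEq ι]

theorem piKronecker_mul [∀ i, Fintype (β i)] (A : ∀ i, Matrix (α i) (β i) R)
    (B : ∀ i, Matrix (β i) (γ i) R) :
    piKronecker (fun i => A i * B i) = piKronecker A * piKronecker B := by
  ext x z
  simp only [piKronecker_apply, Matrix.mul_apply, Fintype.prod_sum, Finset.prod_mul_distrib]

variable [∀ i, Fintype (α i)]

theorem piKronecker_pow [∀ i, DecidableEq (α i)] (A : ∀ i, Matrix (α i) (α i) R) (n : ℕ) :
    piKronecker (fun i => A i ^ n) = piKronecker A ^ n := by
  induction n with
  | zero => simp only [pow_zero, piKronecker_one]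
  | succ n ih => simp only [pow_succ, piKronecker_mul, ih]

theorem trace_piKronecker (A : ∀ i, Matrix (α i) (α i) R) :
    Matrix.trace (piKronecker A) = ∏ i, Matrix.trace (A i) := by
  simp only [Matrix.trace, Matrix.diag_apply, piKronecker_apply, Fintype.prod_sum]

end PiKronecker

section MoebiusTraceSum

variable {R : Type*} [CommRing R]

theorem sum_divisors_eq_trace_pow_iff {α : Type*} [Fintype α] [DecidableEq α] (T : Matrix α α R)
    {f : ℕ → R} :
    (∀ n > 0, ∑ d ∈ n.divisors, f d = Matrix.trace (T ^ n)) ↔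
      ∀ n > 0, f n = moebiusTraceSum T n := by
  rw [ArithmeticFunction.sum_eq_iff_sum_smul_moebius_eq]
  refine forall₂_congr fun n _ => ?_
  rw [Nat.sum_divisorsAntidiagonal
    (f := fun a b => ArithmeticFunction.moebius a • Matrix.trace (T ^ b)), eq_comm, moebiusTraceSum]

theorem sum_divisors_moebiusTraceSum {α : Type*} [Fintype α] [DecidableEq α] (T : Matrix α α R)
    {n : ℕ} (hn : 0 < n) :
    ∑ d ∈ n.divisors, moebiusTraceSum T d = Matrix.trace (T ^ n) :=
  (sum_divisors_eq_trace_pow_iff T).2 (fun _ _ => rfl) n hn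

theorem carlitz_relation_iterated_general {ι : Type*} [Fintype ι] [DecidableEq ι] {α : ι → Type*}
    [∀ i, Fintype (α i)] [∀ i, DecidableEq (α i)] (T : ∀ i, Matrix (α i) (α i) R) {N : ℕ}
    (hN : 0 < N) :
    ∑ s ∈ (Fintype.piFinset fun _ : ι => N.divisors).filter (fun s => Finset.univ.lcm s = N),
        ∏ i, moebiusTraceSum (T i) (s i) =
      moebiusTraceSum (piKronecker T) N := by
  refine (sum_divisors_eq_trace_pow_iff (piKronecker T)
    (f := fun n => ∑ s ∈ (Fintype.piFinset fun _ : ι => n.divisors).filter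
      (fun s => Finset.univ.lcm s = n), ∏ i, moebiusTraceSum (T i) (s i))).1
    (fun n hn => ?_) N hN
  calc
    _ = ∏ i, ∑ d ∈ n.divisors, moebiusTraceSum (T i) d :=
      sum_divisors_sum_filter_lcm_prod _ hn.ne'
    _ = ∏ i, Matrix.trace (T i ^ n) := by simp only [sum_divisors_moebiusTraceSum _ hn]
    _ = Matrix.trace (piKronecker T ^ n) := by rw [← trace_piKronecker, piKronecker_pow]

end MoebiusTraceSum

theorem carlitz_relation_iterated
    {R : Type*} [CommRing R] (l : ℕ) (hl : 0 < l) (m : Fin l → ℕ)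
    (T : (i : Fin l) → Matrix (Fin (m i)) (Fin (m i)) R)
    (N : ℕ) (hN : 0 < N) :
    ∑ s ∈ (Fintype.piFinset fun _ : Fin l => N.divisors).filter
        (fun s => Finset.univ.lcm s = N),
        ∏ i, moebiusTraceSum (T i) (s i) =
      moebiusTraceSum (iteratedKronecker T) N :=
  carlitz_relation_iterated_general T hN
end
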